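/- Let G₁ be an r₁-regular graph on n₁ vertices and m₁ edges, let p,q ≥ 1 be integers, let G₂ = K_{p,q}, and let α ∈ [0,1]. (1) If r₁ = 1 (so G₁ = P₂, n₁ = 2, m₁ = 1), then the A_α-spectrum of G₁ ∨̇ G₂ consists precisely of: α(1+p+q); α(p+2) repeated q−1 times; α(q+2) repeated p−1 times; and the four roots of F(x) = (x² − α(3+p+q)x − 2(1−2α−α²p−α²q))·(x² − α(4+p+q)x + (4α²+2α²p+2α²q+2αpq−pq)) − 2(1−α)²(x−2α)((x−2α)(p+q) − α(p+q)² + 2pq). (2) If r₁ ≥ 2, then the A_α-spectrum of G₁ ∨̇ G₂ consists precisely of: 2α repeated m₁−n₁ times; α(n₁+p) repeated q−1 times; α(n₁+q) repeated p−1 times; the two roots of G_i(x) = x² − α(2+r₁+p+q)x + α(αr₁+r₁+2αp+2αq) − (1−α)((1−α)r₁ + λ_i(A_α(G₁))) for each i = 2,…,n₁; and the four roots of F(x) = (x² − α(2+r₁+p+q)x − 2(r₁−2αr₁−α²p−α²q))·(x² − α(2n₁+p+q)x + (α²n₁²+α²n₁p+α²n₁q+2αpq−pq)) − n₁(1−α)²(x−2α)((x−αn₁)(p+q)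 − α(p+q)² + 2pq). -/

import Mathlib

open Matrix Polynomial
open scoped Classical

noncomputable section

/-- `A_α(G) = α·D(G) + (1-α)·A(G)`, where `D(G)` is the diagonal degree matrix and
`A(G)` the adjacency matrix. -/
def Aalpha {V : Type*} [Fintype V] (G : SimpleGraph V) (α : ℝ) : Matrix V V ℝ :=
  α • Matrix.diagonal (fun v => (G.degree v : ℝ)) + (1 - α) • G.adjMatrix ℝ

/-- The subdivision-vertex join `G₁ ∨̇ G₂`: take the subdivision graph `S(G₁)` (a new
vertex inserted in each edge of `G₁`) together with `G₂`, and join every original vertex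
of `G₁` with every vertex of `G₂`. -/
def subdivisionVertexJoin {V₁ V₂ : Type*} (G₁ : SimpleGraph V₁) (G₂ : SimpleGraph V₂) :
    SimpleGraph (V₁ ⊕ (↥G₁.edgeSet ⊕ V₂)) :=
  SimpleGraph.fromRel fun a b =>
    match a, b with
    | Sum.inl v, Sum.inr (Sum.inl e) => v ∈ (e : Sym2 V₁)
    | Sum.inl _, Sum.inr (Sum.inr _) => True
    | Sum.inr (Sum.inr u), Sum.inr (Sum.inr w) => G₂.Adj u w
    | _, _ => False

section Determinants

variable {K : Type*} [Field K] {m n : Type*} [Fintype m] [Fintype n] [DecidableEq m]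
  [DecidableEq n]

theorem det_fromBlocks_of_mul_eq (A : Matrix m m K) (B : Matrix m n K) (C : Matrix n m K)
    (D : Matrix n n K) (Y : Matrix n m K) (h : D * Y = C) :
    (fromBlocks A B C D).det = D.det * (A - B * Y).det := by
  have key : fromBlocks A B C D * fromBlocks 1 0 (-Y) 1 = fromBlocks (A - B * Y) B 0 D := by
    simp [fromBlocks_multiply, h, sub_eq_add_neg]
  have hdet := congrArg Matrix.det key
  rw [det_mul, det_fromBlocks_zero₁₂, det_fromBlocks_zero₂₁] at hdet
  simpa [mul_comm] using hdet

theorem det_one_sub_const (t : K) :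
    (1 - of fun _ _ => t : Matrix n n K).det = 1 - t * Fintype.card n := by
  have h : (1 - of fun _ _ => t : Matrix n n K) =
      1 + replicateCol Unit (fun _ : n => -t) * replicateRow Unit (fun _ : n => (1 : K)) := by
    ext i j
    simp [Matrix.mul_apply, sub_eq_add_neg]
  rw [h, det_one_add_replicateCol_mul_replicateRow]
  simp [dotProduct]
  ring

theorem det_sub_const_of_rowSum (P : Matrix n n K) (ρ γ : K) (hρ : ρ ≠ 0)
    (hP : ∀ i, ∑ j, P i j = ρ) :
    (P - of fun _ _ => γ).det = P.det * (1 - γ / ρ * Fintype.card n) := by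
  rw [← det_one_sub_const, ← det_mul]
  congr 1
  ext i j
  rw [mul_sub, mul_one]
  simp [Matrix.mul_apply, ← Finset.sum_mul, hP, mul_div_cancel₀ _ hρ]

theorem det_smul_one_sub_const (a γ : K) (ha : a ≠ 0) :
    (a • 1 - of fun _ _ => γ : Matrix n n K).det =
      a ^ Fintype.card n * (1 - γ / a * Fintype.card n) := by
  rw [det_sub_const_of_rowSum _ a γ ha]
  · simp
  · intro i
    simp [Matrix.one_apply]

theorem det_smul_one_sub_smul_of_charpoly_eq_prod (M : Matrix n n K) (μ : n → K)
    (h : M.charpoly = ∏ i, (X - C (μ i))) (k t : K) :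
    (k • 1 - t • M).det = ∏ i, (k - t * μ i) := by
  rcases eq_or_ne t 0 with rfl | ht
  · simp
  · have he := congrArg (Polynomial.eval (k / t)) h
    rw [Matrix.eval_charpoly, Polynomial.eval_prod] at he
    have hM : k • 1 - t • M = t • (scalar n (k / t) - M) := by
      ext i j
      by_cases hij : i = j <;> simp [hij, mul_sub, mul_div_cancel₀ _ ht]
    rw [hM, det_smul, he, Fintype.card, ← Finset.prod_const, ← Finset.prod_mul_distrib]
    refine Finset.prod_congr rfl fun i _ => ?_
    simp [mul_sub, mul_div_cancel₀ _ ht]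

/-- The determinant of a block matrix with scalar diagonal blocks and constant off-diagonal blocks,
both off-diagonal blocks having the same constant. -/
theorem det_fromBlocks_smul_one_const (a b c : K) (ha : a ≠ 0) (hb : b ≠ 0) :
    (fromBlocks (a • 1 : Matrix m m K) (of fun _ _ => c) (of fun _ _ => c)
        (b • 1 : Matrix n n K)).det =
      a ^ Fintype.card m * b ^ Fintype.card n *
        (1 - c ^ 2 * Fintype.card m * Fintype.card n / (a * b)) := by
  rw [det_fromBlocks_of_mul_eq _ _ _ _ (of fun _ _ => c / b)]
  · have h : ((of fun _ _ => c : Matrix m n K) * (of fun _ _ => c / b : Matrix n m K)) =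
        of fun _ _ => c ^ 2 * Fintype.card n / b := by
      ext i j
      simp [Matrix.mul_apply]
      ring
    rw [h, det_smul_one_sub_const _ _ ha]
    simp
    field_simp
  · ext i j
    simp [mul_div_cancel₀ _ hb]

end Determinants

theorem Polynomial.eq_of_forall_eval_eq_of_eval_ne_zero {R : Type*} [CommRing R] [IsDomain R]
    [Infinite R] {f g h : R[X]} (hh : h ≠ 0)
    (hfg : ∀ x, h.eval x ≠ 0 → f.eval x = g.eval x) : f = g := by
  refine mul_left_cancel₀ hh (Polynomial.funext fun x => ?_)
  by_cases hx : h.eval x = 0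
  · simp [hx]
  · simp [hfg x hx]

section SubdivisionVertexJoinAdj

variable {V W : Type*} (G : SimpleGraph V) (H : SimpleGraph W) (v v' : V)
  (e e' : G.edgeSet) (w w' : W)

@[simp]
theorem subdivisionVertexJoin_adj_vertex_vertex :
    ¬ (subdivisionVertexJoin G H).Adj (Sum.inl v) (Sum.inl v') := by
  simp [subdivisionVertexJoin]

@[simp]
theorem subdivisionVertexJoin_adj_vertex_edge :
    (subdivisionVertexJoin G H).Adj (Sum.inl v) (Sum.inr (Sum.inl e)) ↔ v ∈ (e : Sym2 V) := by
  simp [subdivisionVertexJoin]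

@[simp]
theorem subdivisionVertexJoin_adj_vertex_right :
    (subdivisionVertexJoin G H).Adj (Sum.inl v) (Sum.inr (Sum.inr w)) := by
  simp [subdivisionVertexJoin]

@[simp]
theorem subdivisionVertexJoin_adj_edge_vertex :
    (subdivisionVertexJoin G H).Adj (Sum.inr (Sum.inl e)) (Sum.inl v) ↔ v ∈ (e : Sym2 V) := by
  simp [subdivisionVertexJoin]

@[simp]
theorem subdivisionVertexJoin_adj_edge_edge :
    ¬ (subdivisionVertexJoin G H).Adj (Sum.inr (Sum.inl e)) (Sum.inr (Sum.inl e')) := by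
  simp [subdivisionVertexJoin]

@[simp]
theorem subdivisionVertexJoin_adj_edge_right :
    ¬ (subdivisionVertexJoin G H).Adj (Sum.inr (Sum.inl e)) (Sum.inr (Sum.inr w)) := by
  simp [subdivisionVertexJoin]

@[simp]
theorem subdivisionVertexJoin_adj_right_vertex :
    (subdivisionVertexJoin G H).Adj (Sum.inr (Sum.inr w)) (Sum.inl v) := by
  simp [subdivisionVertexJoin]

@[simp]
theorem subdivisionVertexJoin_adj_right_edge :
    ¬ (subdivisionVertexJoin G H).Adj (Sum.inr (Sum.inr w)) (Sum.inr (Sum.inl e)) := by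
  simp [subdivisionVertexJoin]

@[simp]
theorem subdivisionVertexJoin_adj_right_right :
    (subdivisionVertexJoin G H).Adj (Sum.inr (Sum.inr w)) (Sum.inr (Sum.inr w')) ↔
      H.Adj w w' := by
  simpa [subdivisionVertexJoin, H.adj_comm w' w] using fun h : H.Adj w w' => h.ne

end SubdivisionVertexJoinAdj

section Aalpha

variable {V W : Type*} [Fintype V] [Fintype W]

theorem Aalpha_apply (G : SimpleGraph V) (α : ℝ) (i j : V) :
    Aalpha G α i j =
      if i = j then α * G.degree i else if G.Adj i j then 1 - α else 0 := by
  by_cases h : i = j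
  · subst h
    simp [Aalpha]
  · simp [Aalpha, h]

theorem sum_Aalpha_apply (G : SimpleGraph V) (α : ℝ) (i : V) :
    ∑ j, Aalpha G α i j = G.degree i := by
  have h : ∑ j, G.adjMatrix ℝ i j = G.degree i := by
    simp [SimpleGraph.degree_eq_sum_if_adj, SimpleGraph.adjMatrix_apply]
  simp only [Aalpha, Matrix.add_apply, Matrix.smul_apply, Finset.sum_add_distrib,
    smul_eq_mul, ← Finset.mul_sum, h]
  simp [Matrix.diagonal_apply]
  ring

/-- The vertex-edge incidence matrix with columns indexed by the edges of the graph. -/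
def edgeIncMatrix (G : SimpleGraph V) : Matrix V G.edgeSet ℝ :=
  of fun v e => if v ∈ (e : Sym2 V) then 1 else 0

theorem edgeIncMatrix_mul_transpose (G : SimpleGraph V) :
    edgeIncMatrix G * (edgeIncMatrix G)ᵀ =
      Matrix.diagonal (fun v => (G.degree v : ℝ)) + G.adjMatrix ℝ := by
  have h : edgeIncMatrix G * (edgeIncMatrix G)ᵀ = G.incMatrix ℝ * (G.incMatrix ℝ)ᵀ := by
    ext v w
    simp only [Matrix.mul_apply, Matrix.transpose_apply]
    rw [← Finset.sum_subset (Finset.subset_univ G.edgeSet.toFinset),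
      Finset.sum_subtype (p := (· ∈ G.edgeSet))]
    · refine Finset.sum_congr rfl fun e _ => ?_
      simp [edgeIncMatrix, SimpleGraph.incMatrix_apply', SimpleGraph.incidenceSet]
    · simp
    · intro e _ he
      simp [SimpleGraph.incMatrix_apply', SimpleGraph.incidenceSet, Set.mem_toFinset.not.mp he]
  rw [h, SimpleGraph.incMatrix_mul_transpose]
  ext v w
  by_cases hvw : v = w
  · subst hvw; simp
  · simp [hvw]

theorem sum_edgeIncMatrix_apply (G : SimpleGraph V) (v : V) :
    ∑ e, edgeIncMatrix G v e = G.degree v := by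
  have h := congrFun (congrFun (edgeIncMatrix_mul_transpose G) v) v
  rw [Matrix.mul_apply] at h
  simp only [Matrix.add_apply, Matrix.diagonal_apply_eq, SimpleGraph.adjMatrix_apply,
    SimpleGraph.irrefl, if_false, add_zero] at h
  rw [← h]
  refine Finset.sum_congr rfl fun e _ => ?_
  by_cases hv : v ∈ (e : Sym2 V) <;> simp [edgeIncMatrix, hv]

theorem sum_edgeIncMatrix_apply_edge (G : SimpleGraph V) (e : G.edgeSet) :
    ∑ v, edgeIncMatrix G v e = 2 := by
  rw [← G.sum_incMatrix_apply_of_mem_edgeSet (R := ℝ) e.2]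
  refine Finset.sum_congr rfl fun v _ => ?_
  simp [edgeIncMatrix, SimpleGraph.incMatrix_apply', SimpleGraph.incidenceSet]

theorem Aalpha_subdivisionVertexJoin (G : SimpleGraph V) (H : SimpleGraph W) (α : ℝ) :
    Aalpha (subdivisionVertexJoin G H) α =
      fromBlocks (diagonal fun v => α * (G.degree v + Fintype.card W))
        (fromCols ((1 - α) • edgeIncMatrix G) (of fun _ _ => 1 - α))
        (fromRows ((1 - α) • (edgeIncMatrix G)ᵀ) (of fun _ _ => 1 - α))
        (fromBlocks ((2 * α) • 1) 0 0 ((α * Fintype.card V) • 1 + Aalpha H α)) := by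
  have hV : ∀ v, ((subdivisionVertexJoin G H).degree (Sum.inl v) : ℝ) =
      G.degree v + Fintype.card W := by
    intro v
    rw [SimpleGraph.degree_eq_sum_if_adj, ← sum_edgeIncMatrix_apply, Fintype.sum_sum_type,
      Fintype.sum_sum_type]
    simp [edgeIncMatrix]
  have hE : ∀ e, ((subdivisionVertexJoin G H).degree (Sum.inr (Sum.inl e)) : ℝ) = 2 := by
    intro e
    rw [SimpleGraph.degree_eq_sum_if_adj, ← sum_edgeIncMatrix_apply_edge G e,
      Fintype.sum_sum_type, Fintype.sum_sum_type]
    simp [edgeIncMatrix]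
  have hW : ∀ w, ((subdivisionVertexJoin G H).degree (Sum.inr (Sum.inr w)) : ℝ) =
      Fintype.card V + H.degree w := by
    intro w
    rw [SimpleGraph.degree_eq_sum_if_adj, SimpleGraph.degree_eq_sum_if_adj,
      Fintype.sum_sum_type, Fintype.sum_sum_type]
    simp
  ext i j
  rw [Aalpha_apply]
  rcases i with i | i | i <;> rcases j with j | j | j <;>
    simp [Matrix.diagonal_apply, Matrix.one_apply, edgeIncMatrix, Aalpha_apply, hV, hE, hW,
      mul_comm α 2]
  split_ifs <;> ring

theorem Aalpha_completeBipartiteGraph (α : ℝ) :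
    Aalpha (completeBipartiteGraph V W) α =
      fromBlocks ((α * Fintype.card W) • 1) (of fun _ _ => 1 - α) (of fun _ _ => 1 - α)
        ((α * Fintype.card V) • 1) := by
  have hV : ∀ v, ((completeBipartiteGraph V W).degree (Sum.inl v) : ℝ) = Fintype.card W := by
    intro v
    rw [SimpleGraph.degree_eq_sum_if_adj, Fintype.sum_sum_type]
    simp
  have hW : ∀ w, ((completeBipartiteGraph V W).degree (Sum.inr w) : ℝ) = Fintype.card V := by
    intro w
    rw [SimpleGraph.degree_eq_sum_if_adj, Fintype.sum_sum_type]
    simp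
  ext i j
  rw [Aalpha_apply]
  rcases i with i | i <;> rcases j with j | j <;> simp [hV, hW, Matrix.one_apply]

theorem le_of_isRoot_charpoly_Aalpha [DecidableEq V] (G : SimpleGraph V) {r : ℕ}
    (hreg : G.IsRegularOfDegree r) {α : ℝ} (hα : α ≤ 1) {μ : ℝ}
    (hμ : (Aalpha G α).charpoly.IsRoot μ) : μ ≤ r := by
  have h1 : Module.End.HasEigenvalue (Matrix.toLin' (Aalpha G α)) μ := by
    rw [Module.End.hasEigenvalue_iff_isRoot_charpoly]
    simpa using hμ
  obtain ⟨k, hk⟩ := eigenvalue_mem_ball h1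
  rw [Metric.mem_closedBall, Real.dist_eq] at hk
  have h2 : ∑ j ∈ Finset.univ.erase k, ‖Aalpha G α k j‖ =
      ∑ j ∈ Finset.univ.erase k, Aalpha G α k j := by
    refine Finset.sum_congr rfl fun j hj => ?_
    rw [Real.norm_of_nonneg]
    rw [Aalpha_apply, if_neg (Finset.ne_of_mem_erase hj).symm]
    split_ifs <;> linarith
  have h3 := Finset.add_sum_erase Finset.univ (fun j => Aalpha G α k j) (Finset.mem_univ k)
  rw [sum_Aalpha_apply] at h3
  have h4 : G.degree k = r := by convert hreg k
  rw [h4] at h3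
  rw [h2] at hk
  linarith [le_abs_self (μ - Aalpha G α k k)]

theorem isRoot_charpoly_Aalpha [DecidableEq V] [Nonempty V] (G : SimpleGraph V) {r : ℕ}
    (hreg : G.IsRegularOfDegree r) (α : ℝ) :
    (Aalpha G α).charpoly.IsRoot r := by
  rw [Polynomial.IsRoot, Matrix.eval_charpoly, ← Matrix.exists_mulVec_eq_zero_iff]
  refine ⟨1, one_ne_zero, ?_⟩
  ext i
  have h4 : G.degree i = r := by convert hreg i
  rw [sub_mulVec]
  simp [Matrix.mulVec, dotProduct, sum_Aalpha_apply, h4]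

end Aalpha

theorem smul_edgeIncMatrix_mul_transpose {V : Type*} [Fintype V] [DecidableEq V]
    (G : SimpleGraph V) {r : ℕ} (hreg : G.IsRegularOfDegree r) (α : ℝ) :
    (1 - α) • (edgeIncMatrix G * (edgeIncMatrix G)ᵀ) =
      Aalpha G α + ((1 - 2 * α) * r : ℝ) • 1 := by
  have hd : ∀ v, G.degree v = r := fun v => by convert hreg v
  rw [edgeIncMatrix_mul_transpose, Aalpha]
  ext i j
  by_cases hij : i = j
  · subst hij
    simp [hd]
    ring
  · simp [hij]

/-- The characteristic polynomial of `A_α(G ∨̇ K_{P,Q})` at a point `x` where the Schur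
complements are defined. -/
theorem eval_charpoly_Aalpha_subdivisionVertexJoin {V P Q : Type*} [Fintype V] [Fintype P]
    [Fintype Q] [DecidableEq V] [DecidableEq P] [DecidableEq Q] (G : SimpleGraph V)
    {r : ℕ} (hreg : G.IsRegularOfDegree r) (α : ℝ) (μ : V → ℝ)
    (hμ : (Aalpha G α).charpoly = ∏ i, (X - C (μ i))) (i₀ : V) (hi₀ : μ i₀ = r)
    {n p q : ℕ} (hn : Fintype.card V = n) (hp : Fintype.card P = p + 1)
    (hq : Fintype.card Q = q + 1)
    (x y a b c Δ T N : ℝ) (hy : y = x - 2 * α) (ha : a = x - α * (n + (q + 1)))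
    (hb : b = x - α * (n + (p + 1))) (hc : c = 1 - α)
    (hΔ : Δ = a * b - c ^ 2 * (p + 1) * (q + 1))
    (hN : N = (p + 1) * b + (q + 1) * a + 2 * c * (p + 1) * (q + 1))
    (hT : T = (x - α * (r + (p + 1) + (q + 1))) * y - 2 * c ^ 2 * r)
    (hy0 : y ≠ 0) (ha0 : a ≠ 0) (hb0 : b ≠ 0) (hΔ0 : Δ ≠ 0) (hT0 : T ≠ 0) :
    (Aalpha (subdivisionVertexJoin G (completeBipartiteGraph P Q)) α).charpoly.eval x * y ^ n =
      y ^ Fintype.card G.edgeSet * a ^ p * b ^ q *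
        (∏ i ∈ Finset.univ.erase i₀,
          ((x - α * (r + (p + 1) + (q + 1))) * y - c * (c * r + μ i - α * r))) *
        (T * Δ - n * c ^ 2 * y * N) := by
  have hd : ∀ v, G.degree v = r := fun v => by convert hreg v
  set R := edgeIncMatrix G with hR
  set τ : ℝ := c / y with hτ
  set κ : ℝ := x - α * (r + (p + 1) + (q + 1)) - τ * ((1 - 2 * α) * r) with hκ
  set γ : ℝ := c ^ 2 * N / Δ with hγ
  set D : Matrix (P ⊕ Q) (P ⊕ Q) ℝ :=
    fromBlocks (a • 1) (of fun _ _ => -c) (of fun _ _ => -c) (b • 1) with hD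
  set B : Matrix V (G.edgeSet ⊕ (P ⊕ Q)) ℝ := fromCols (-c • R) (of fun _ _ => -c) with hB
  set E : Matrix (G.edgeSet ⊕ (P ⊕ Q)) (G.edgeSet ⊕ (P ⊕ Q)) ℝ :=
    fromBlocks (y • 1) 0 0 D with hE
  have hM : scalar (V ⊕ (G.edgeSet ⊕ (P ⊕ Q))) x -
      Aalpha (subdivisionVertexJoin G (completeBipartiteGraph P Q)) α =
      fromBlocks ((x - α * (r + (p + 1) + (q + 1))) • 1)
        B (fromRows (-c • Rᵀ) (of fun _ _ => -c)) E := by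
    rw [Aalpha_subdivisionVertexJoin, Aalpha_completeBipartiteGraph]
    ext i j
    rcases i with i | i | i | i <;> rcases j with j | j | j | j <;>
      simp [Matrix.diagonal_apply, Matrix.one_apply, hd, hn, hp, hq, hB, hE, hD,
        ← hR, hc, hy, ha, hb]
    all_goals first
      | (split_ifs <;> ring)
      | ring
  have hdetD : D.det = a ^ p * b ^ q * Δ := by
    rw [hD, det_fromBlocks_smul_one_const _ _ _ ha0 hb0, hΔ, hp, hq]
    push_cast
    field_simp
    ring
  set U : Matrix (P ⊕ Q) V ℝ := fromRows (of fun _ _ => -(c * (b + c * (q + 1)) / Δ))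
    (of fun _ _ => -(c * (a + c * (p + 1)) / Δ)) with hU
  set Y : Matrix (G.edgeSet ⊕ (P ⊕ Q)) V ℝ := fromRows (-τ • Rᵀ) U with hY
  have hDY : E * Y =
      fromRows (-c • Rᵀ) (of fun _ _ => -c : Matrix (P ⊕ Q) V ℝ) := by
    rw [hY, hE, fromBlocks_mul_fromRows, hD, hU, fromBlocks_mul_fromRows]
    ext i j
    rcases i with i | i | i
    · simp [hτ]
      field_simp
    · simp [Matrix.mul_apply, hq]
      field_simp
      rw [hΔ]
      ring
    · simp [Matrix.mul_apply, hp]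
      field_simp
      rw [hΔ]
      ring
  have hS : (x - α * (r + (p + 1) + (q + 1))) • (1 : Matrix V V ℝ) -
      B * Y =
      (κ • 1 - τ • Aalpha G α) - of fun _ _ => γ := by
    have h1 : (of fun _ _ => -c : Matrix V (P ⊕ Q) ℝ) * U = of fun _ _ => γ := by
      ext i j
      simp [hU, Matrix.mul_apply, hp, hq, hγ, hN]
      field_simp
      ring
    have h2 : (-c • R) * (-τ • Rᵀ) = τ • (Aalpha G α + ((1 - 2 * α) * r : ℝ) • 1) := by
      rw [← smul_edgeIncMatrix_mul_transpose G hreg, ← hR, ← hc]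
      simp [smul_smul]
    rw [hY, hB, fromCols_mul_fromRows, h1, h2]
    module
  have hρ : κ - τ * r = T / y := by
    rw [hκ, hτ, hT, hc]
    field_simp
    ring
  have hrow : ∀ i, ∑ j, (κ • 1 - τ • Aalpha G α : Matrix V V ℝ) i j = T / y := by
    intro i
    rw [← hρ]
    simp [Finset.sum_sub_distrib, ← Finset.mul_sum, sum_Aalpha_apply, hd, Matrix.one_apply]
  have hprod : ∏ i, (κ - τ * μ i) = T / y * ∏ i ∈ Finset.univ.erase i₀, (κ - τ * μ i) := by
    rw [← Finset.mul_prod_erase _ _ (Finset.mem_univ i₀), hi₀, hρ]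
  have hn1 : (Finset.univ.erase i₀).card + 1 = n := by
    rw [Finset.card_erase_add_one (Finset.mem_univ i₀), Finset.card_univ, hn]
  have hprod' : ∏ i ∈ Finset.univ.erase i₀,
      ((x - α * (r + (p + 1) + (q + 1))) * y - c * (c * r + μ i - α * r)) =
      y ^ (Finset.univ.erase i₀).card * ∏ i ∈ Finset.univ.erase i₀, (κ - τ * μ i) := by
    rw [← Finset.prod_const, ← Finset.prod_mul_distrib]
    refine Finset.prod_congr rfl fun i _ => ?_
    rw [hκ, hτ, hc]
    field_simp
    ring
  rw [Matrix.eval_charpoly, hM, det_fromBlocks_of_mul_eq _ _ _ _ _ hDY, hS,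
    det_sub_const_of_rowSum _ _ _ (div_ne_zero hT0 hy0) hrow,
    det_smul_one_sub_smul_of_charpoly_eq_prod _ _ hμ, hprod, hprod', hE, det_fromBlocks_zero₂₁,
    hdetD, hn, ← hn1, hγ]
  simp only [det_smul, det_one, mul_one]
  push_cast
  field_simp
  ring

theorem charpoly_Aalpha_subdivisionVertexJoin_completeBipartiteGraph {n r p q : ℕ}
    (hp : 1 ≤ p) (hq : 1 ≤ q) (G : SimpleGraph (Fin n)) (hreg : G.IsRegularOfDegree r) (α : ℝ)
    (μ : Fin n → ℝ) (hμ : (Aalpha G α).charpoly = ∏ i, (X - C (μ i))) (i₀ : Fin n)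
    (hi₀ : μ i₀ = r) :
    (Aalpha (subdivisionVertexJoin G (completeBipartiteGraph (Fin p) (Fin q))) α).charpoly *
        (X - C (2 * α)) ^ n =
      (X - C (2 * α)) ^ Fintype.card G.edgeSet *
        (X - C (α * (n + p))) ^ (q - 1) *
        (X - C (α * (n + q))) ^ (p - 1) *
        (∏ i ∈ Finset.univ.erase i₀,
          (X ^ 2 - C (α * (2 + r + p + q)) * X
            + C (α * (α * r + r + 2 * α * p + 2 * α * q)
                - (1 - α) * ((1 - α) * r + μ i)))) *
        ((X ^ 2 - C (α * (2 + r + p + q)) * X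
            - C (2 * (r - 2 * α * r - α ^ 2 * p - α ^ 2 * q))) *
            (X ^ 2 - C (α * (2 * n + p + q)) * X
              + C (α ^ 2 * n ^ 2 + α ^ 2 * n * p + α ^ 2 * n * q + 2 * α * p * q - p * q))
          - C (n * (1 - α) ^ 2) * (X - C (2 * α)) *
            (C ((p : ℝ) + q) * (X - C (α * n)) - C (α * ((p : ℝ) + q) ^ 2)
              + C (2 * (p : ℝ) * q))) := by
  obtain ⟨p, rfl⟩ := Nat.exists_eq_add_of_le' hp
  obtain ⟨q, rfl⟩ := Nat.exists_eq_add_of_le' hq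
  have hquad : ∀ s t : ℝ, (X ^ 2 - C s * X + C t : ℝ[X]) ≠ 0 := fun s t h => by
    simpa [coeff_X, coeff_C] using congrArg (fun f => f.coeff 2) h
  refine Polynomial.eq_of_forall_eval_eq_of_eval_ne_zero
    (mul_ne_zero (mul_ne_zero (mul_ne_zero (mul_ne_zero (X_sub_C_ne_zero (2 * α))
      (X_sub_C_ne_zero (α * (n + (q + 1))))) (X_sub_C_ne_zero (α * (n + (p + 1)))))
      (hquad (α * (2 * n + (p + 1) + (q + 1))) (α ^ 2 * n ^ 2 + α ^ 2 * n * (p + 1) +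
        α ^ 2 * n * (q + 1) + 2 * α * (p + 1) * (q + 1) - (p + 1) * (q + 1))))
      (hquad (α * (2 + r + (p + 1) + (q + 1)))
        (-(2 * (r - 2 * α * r - α ^ 2 * (p + 1) - α ^ 2 * (q + 1)))))) fun x hx => ?_
  simp only [eval_mul, mul_ne_zero_iff, eval_sub, eval_add, eval_X, eval_C, eval_pow] at hx
  obtain ⟨⟨⟨⟨hy0, ha0⟩, hb0⟩, hΔ0⟩, hT0⟩ := hx
  have h := eval_charpoly_Aalpha_subdivisionVertexJoin (P := Fin (p + 1)) (Q := Fin (q + 1))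
    G hreg α μ hμ i₀ hi₀ (Fintype.card_fin n) (Fintype.card_fin _) (Fintype.card_fin _) x
    _ _ _ (1 - α) _ _ _ rfl rfl rfl rfl rfl rfl rfl hy0 ha0 hb0
    (by convert hΔ0 using 1; ring) (by convert hT0 using 1; ring)
  simp only [eval_mul, eval_sub, eval_add, eval_X, eval_C, eval_pow, eval_prod,
    Nat.add_sub_cancel, Nat.cast_add, Nat.cast_one]
  rw [h]
  have hprod : ∏ i ∈ Finset.univ.erase i₀, ((x - α * (r + (p + 1) + (q + 1))) * (x - 2 * α) -
        (1 - α) * ((1 - α) * r + μ i - α * r)) =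
      ∏ i ∈ Finset.univ.erase i₀, (x ^ 2 - α * (2 + r + (p + 1) + (q + 1)) * x +
        (α * (α * r + r + 2 * α * (p + 1) + 2 * α * (q + 1)) -
          (1 - α) * ((1 - α) * r + μ i))) :=
    Finset.prod_congr rfl fun i _ => by ring
  rw [hprod]
  ring

theorem eq_degree_of_antitone_charpoly_Aalpha {n r : ℕ} (G : SimpleGraph (Fin n))
    (hreg : G.IsRegularOfDegree r) {α : ℝ} (hα : α ≤ 1) {μ : Fin n → ℝ} (hμ : Antitone μ)
    (hμch : (Aalpha G α).charpoly = ∏ i, (X - C (μ i))) (i₀ : Fin n) (hi₀ : i₀.val = 0) :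
    μ i₀ = r := by
  have : Nonempty (Fin n) := ⟨i₀⟩
  have hroot := isRoot_charpoly_Aalpha G hreg α
  rw [hμch, Polynomial.IsRoot, eval_prod, Finset.prod_eq_zero_iff] at hroot
  obtain ⟨i, -, hi⟩ := hroot
  have hi' : (r : ℝ) = μ i := by simpa [sub_eq_zero] using hi
  refine le_antisymm (le_of_isRoot_charpoly_Aalpha G hreg hα ?_) ?_
  · rw [hμch, Polynomial.IsRoot, eval_prod]
    exact Finset.prod_eq_zero (Finset.mem_univ i₀) (by simp)
  · rw [hi']
    exact hμ (Fin.le_def.mpr (by omega))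

theorem two_mul_card_edgeSet_of_isRegularOfDegree {V : Type*} [Fintype V] (G : SimpleGraph V)
    {r : ℕ} (hreg : G.IsRegularOfDegree r) :
    2 * Fintype.card G.edgeSet = Fintype.card V * r := by
  have hd : ∀ v, G.degree v = r := fun v => by convert hreg v
  have h := G.sum_degrees_eq_twice_card_edges
  rw [← SimpleGraph.edgeFinset_card, ← h]
  simp [hd]

/-- Corollary: the `A_α`-spectrum (as the factorization of the `A_α`-characteristic
polynomial) of the subdivision-vertex join `G₁ ∨̇ K_{p,q}` of an `r₁`-regular graph `G₁`
and the complete bipartite graph `K_{p,q}`, in the cases `r₁ = 1` and `r₁ ≥ 2`. -/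
theorem Aalpha_spectrum_subdivisionVertexJoin_completeBipartite
    {n₁ m₁ r₁ p q : ℕ} (hp : 1 ≤ p) (hq : 1 ≤ q)
    (G₁ : SimpleGraph (Fin n₁))
    (hconn₁ : G₁.Connected) (hreg₁ : G₁.IsRegularOfDegree r₁)
    (hm : Fintype.card G₁.edgeSet = m₁)
    (α : ℝ) (hα : α ∈ Set.Icc (0 : ℝ) 1)
    (μ₁ : Fin n₁ → ℝ) (hμ₁ : Antitone μ₁)
    (hμ₁ch : (Aalpha G₁ α).charpoly = ∏ i, (X - C (μ₁ i))) :
    (r₁ = 1 →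
      (Aalpha (subdivisionVertexJoin G₁ (completeBipartiteGraph (Fin p) (Fin q))) α).charpoly =
        (X - C (α * (1 + p + q))) *
        (X - C (α * (p + 2))) ^ (q - 1) *
        (X - C (α * (q + 2))) ^ (p - 1) *
        ((X ^ 2 - C (α * (3 + p + q)) * X - C (2 * (1 - 2 * α - α ^ 2 * p - α ^ 2 * q))) *
            (X ^ 2 - C (α * (4 + p + q)) * X
              + C (4 * α ^ 2 + 2 * α ^ 2 * p + 2 * α ^ 2 * q + 2 * α * p * q - p * q))
          - C (2 * (1 - α) ^ 2) * (X - C (2 * α)) *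
            (C ((p : ℝ) + q) * (X - C (2 * α)) - C (α * ((p : ℝ) + q) ^ 2) + C (2 * (p : ℝ) * q)))) ∧
    (2 ≤ r₁ →
      (Aalpha (subdivisionVertexJoin G₁ (completeBipartiteGraph (Fin p) (Fin q))) α).charpoly =
        (X - C (2 * α)) ^ (m₁ - n₁) *
        (X - C (α * (n₁ + p))) ^ (q - 1) *
        (X - C (α * (n₁ + q))) ^ (p - 1) *
        (∏ i ∈ Finset.univ.filter (fun i : Fin n₁ => i.val ≠ 0),
          (X ^ 2 - C (α * (2 + r₁ + p + q)) * X
            + C (α * (α * r₁ + r₁ + 2 * α * p + 2 * α * q)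
                - (1 - α) * ((1 - α) * r₁ + μ₁ i)))) *
        ((X ^ 2 - C (α * (2 + r₁ + p + q)) * X
            - C (2 * (r₁ - 2 * α * r₁ - α ^ 2 * p - α ^ 2 * q))) *
            (X ^ 2 - C (α * (2 * n₁ + p + q)) * X
              + C (α ^ 2 * n₁ ^ 2 + α ^ 2 * n₁ * p + α ^ 2 * n₁ * q + 2 * α * p * q - p * q))
          - C (n₁ * (1 - α) ^ 2) * (X - C (2 * α)) *
            (C ((p : ℝ) + q) * (X - C (α * n₁)) - C (α * ((p : ℝ) + q) ^ 2) + C (2 * (p : ℝ) * q)))) := by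
  have hn : 0 < n₁ := Fin.pos_iff_nonempty.mpr hconn₁.nonempty
  have hcard := two_mul_card_edgeSet_of_isRegularOfDegree G₁ hreg₁
  rw [hm, Fintype.card_fin] at hcard
  have hμ0 := eq_degree_of_antitone_charpoly_Aalpha G₁ hreg₁ hα.2 hμ₁ hμ₁ch ⟨0, hn⟩ rfl
  have hmain := charpoly_Aalpha_subdivisionVertexJoin_completeBipartiteGraph hp hq G₁ hreg₁ α
    μ₁ hμ₁ch ⟨0, hn⟩ hμ0
  rw [hm] at hmain
  refine ⟨?_, fun hr => ?_⟩
  · rintro rfl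
    have hle := hconn₁.card_vert_le_card_edgeSet_add_one
    simp only [Nat.card_eq_fintype_card, hm, Fintype.card_fin] at hle
    obtain rfl : m₁ = 1 := by omega
    obtain rfl : n₁ = 2 := by omega
    have htr := Matrix.trace_eq_neg_charpoly_nextCoeff (Aalpha G₁ α)
    have hd : ∀ v, G₁.degree v = 1 := fun v => by convert hreg₁ v
    rw [hμ₁ch, prod_X_sub_C_nextCoeff] at htr
    have hμ1 : μ₁ 1 = 2 * α - 1 := by
      simp [Matrix.trace, Fin.sum_univ_two, Aalpha_apply, hd] at htr hμ0
      linarith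
    have herase : (Finset.univ.erase (⟨0, hn⟩ : Fin 2)) = {1} := by
      ext i
      fin_cases i <;> simp
    rw [herase, Finset.prod_singleton, hμ1] at hmain
    refine mul_right_cancel₀ (pow_ne_zero 2 (X_sub_C_ne_zero (2 * α))) (hmain.trans ?_)
    simp only [map_mul, map_add, map_sub, map_pow, map_natCast, map_ofNat, map_one,
      Nat.cast_one, Nat.cast_ofNat]
    ring
  · have hnm : n₁ ≤ m₁ := by nlinarith
    have hfilter : Finset.univ.filter (fun i : Fin n₁ => i.val ≠ 0) =
        Finset.univ.erase ⟨0, hn⟩ := by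
      ext i
      simp [Fin.ext_iff]
    rw [hfilter]
    refine mul_right_cancel₀ (pow_ne_zero n₁ (X_sub_C_ne_zero (2 * α))) (hmain.trans ?_)
    rw [← Nat.sub_add_cancel hnm, pow_add, Nat.add_sub_cancel]
    ring
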